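/- arXiv:1203.2391 — 2 statements merged into one kernel-verified Lean document; each statement's English description precedes it below -/
import Mathlib

section
/- Let θ : S → R be a reflexive extension. Then a left R-module X is torsionless as an R-module if and only if the underlying left S-module X (via restriction of scalars along θ) is torsionless as an S-module. -/
/- STATEMENT 4: For a reflexive extension θ : S → R, a left R-module X is torsionless
over R iff the underlying S-module X (restriction of scalars along θ) is torsionless. -/

universe u v w

/-- The evaluation map `X → Hom_{Sᵒᵖ}(Hom_S(X,S), S)`, `x ↦ (f ↦ f x)`. -/
def evalFun (S : Type u) [Ring S] (X : Type v) [AddCommGroup X] [Module S X] :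
    X → ((X →ₗ[S] S) →ₗ[Sᵐᵒᵖ] S) := fun x =>
  { toFun := fun f => f x
    map_add' := fun _ _ => rfl
    map_smul' := fun _ _ => rfl }

/-- A left `S`-module is reflexive if the evaluation map into its double dual is bijective. -/
def IsReflexiveMod (S : Type u) [Ring S] (X : Type v) [AddCommGroup X] [Module S X] : Prop :=
  Function.Bijective (evalFun S X)

/-- A left `S`-module is torsionless if the evaluation map into its double dual is injective. -/
def IsTorsionlessMod (S : Type u) [Ring S] (X : Type v) [AddCommGroup X] [Module S X] : Prop :=
  Function.Injective (evalFun S X)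

/-- A ring extension `θ : S →+* R` (where the `S`-module structure on `R` is given by
restriction of scalars along `θ`, i.e. `s • r = θ s * r`) is a reflexive extension if the
left `S`-module `R` is reflexive and there is an isomorphism `Hom_S(R,S) ≅ R` of
`R`-`S`-bimodules, where `Hom_S(R,S)` carries the left `R`-action `(a·f)(r) = f (r * a)`
and the right `S`-action `(f·s)(r) = f r * s`, and the right `S`-action on `R` is via `θ`. -/
def IsReflexiveExtension {S : Type u} {R : Type v} [Ring S] [Ring R] (θ : S →+* R)
    [Module S R] : Prop :=
  IsReflexiveMod S R ∧
  ∃ Φ : (R →ₗ[S] S) → R, Function.Bijective Φ ∧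
    (∀ f g : R →ₗ[S] S, Φ (f + g) = Φ f + Φ g) ∧
    (∀ (a : R) (f g : R →ₗ[S] S), (∀ r, g r = f (r * a)) → Φ g = a * Φ f) ∧
    (∀ (s : S) (f g : R →ₗ[S] S), (∀ r, g r = f r * s) → Φ g = Φ f * θ s)

/-!
Linear maps into a torsionless module separate no more points than linear maps into the base ring
do, so a module whose points they separate is torsionless. Both implications are instances of this,
with different targets. An `R`-linear map `X → R` is also an `S`-linear map into the torsionless
`S`-module `R`. Conversely, `f : X → S` corresponds to the `R`-linear map `x ↦ (r ↦ f (r • x))` into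
`Hom_S(R, S)`, which is a torsionless `R`-module because it embeds into `R`.
-/

section Torsionless

variable {S X Y : Type*} [Ring S] [AddCommGroup X] [Module S X] [AddCommGroup Y] [Module S Y]

theorem isTorsionlessMod_iff_forall_eq :
    IsTorsionlessMod S X ↔ ∀ x y : X, (∀ f : X →ₗ[S] S, f x = f y) → x = y :=
  forall₂_congr fun _ _ => imp_congr_left LinearMap.ext_iff

theorem isTorsionlessMod_self : IsTorsionlessMod S S :=
  isTorsionlessMod_iff_forall_eq.mpr fun _ _ h => h LinearMap.id

theorem IsTorsionlessMod.of_forall_eq (hY : IsTorsionlessMod S Y)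
    (h : ∀ x y : X, (∀ f : X →ₗ[S] Y, f x = f y) → x = y) : IsTorsionlessMod S X := by
  rw [isTorsionlessMod_iff_forall_eq] at hY ⊢
  intro x y hxy
  exact h x y fun f => hY _ _ fun g => hxy (g ∘ₗ f)

theorem IsTorsionlessMod.of_injective (hY : IsTorsionlessMod S Y) (f : X →ₗ[S] Y)
    (hf : Function.Injective f) : IsTorsionlessMod S X :=
  hY.of_forall_eq fun _ _ h => hf (h f)

end Torsionless

section Coextension

variable {S R N X : Type*} [Semiring S] [Semiring R] [Module S R] [IsScalarTower S R R]
  [AddCommMonoid N] [Module S N]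
  [AddCommMonoid X] [Module R X] [Module S X] [IsScalarTower S R X]

/-- The left `R`-module structure `(a • f) r = f (r * a)` on `Hom_S(R, N)`, the coextension of
scalars of `N`. It is not a global instance, since for `R` acting on `N` it would compete with the
action of `R` on the values. -/
abbrev coextensionModule : Module R (R →ₗ[S] N) :=
  Module.compHom (R := Rᵐᵒᵖᵈᵐᵃ) (R →ₗ[S] N) (RingEquiv.opOp R).toRingHom

attribute [local instance] coextensionModule

theorem coextensionModule_smul_apply (a : R) (f : R →ₗ[S] N) (r : R) : (a • f) r = f (r * a) :=
  rfl

/-- The `R`-linear map `x ↦ (r ↦ f (r • x))` into the coextension of scalars of `N` that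
corresponds to an `S`-linear map `f : X → N` under the adjunction between restriction and
coextension of scalars. -/
def coextensionLift (f : X →ₗ[S] N) : X →ₗ[R] (R →ₗ[S] N) where
  toFun x := f ∘ₗ (LinearMap.toSpanSingleton R X x).restrictScalars S
  map_add' x y := LinearMap.ext fun r => by
    change f (r • (x + y)) = f (r • x) + f (r • y)
    rw [smul_add, map_add]
  map_smul' a x := LinearMap.ext fun r => by
    change f (r • a • x) = f ((r * a) • x)
    rw [mul_smul]

theorem coextensionLift_apply_one (f : X →ₗ[S] N) (x : X) :
    coextensionLift (R := R) f x 1 = f x :=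
  congrArg f (one_smul R x)

end Coextension

section RestrictScalars

attribute [local instance] coextensionModule

variable {S R X : Type*} [Ring S] [Ring R] [Module S R] [IsScalarTower S R R]

section

variable [AddCommGroup X] [Module R X] [Module S X] [IsScalarTower S R X]

theorem IsTorsionlessMod.restrictScalars (hR : IsTorsionlessMod S R) (hX : IsTorsionlessMod R X) :
    IsTorsionlessMod S X :=
  hR.of_forall_eq fun x y h =>
    isTorsionlessMod_iff_forall_eq.mp hX x y fun f => h (f.restrictScalars S)

theorem IsTorsionlessMod.of_restrictScalars (hdual : IsTorsionlessMod R (R →ₗ[S] S))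
    (hX : IsTorsionlessMod S X) : IsTorsionlessMod R X := by
  refine hdual.of_forall_eq fun x y h => isTorsionlessMod_iff_forall_eq.mp hX x y fun f => ?_
  calc f x = coextensionLift (R := R) f x 1 := (coextensionLift_apply_one f x).symm
    _ = coextensionLift (R := R) f y 1 := by rw [h (coextensionLift f)]
    _ = f y := coextensionLift_apply_one f y

theorem reflexive_extension_preserves_torsionless_general (hR : IsTorsionlessMod S R)
    (hdual : IsTorsionlessMod R (R →ₗ[S] S)) : IsTorsionlessMod R X ↔ IsTorsionlessMod S X :=
  ⟨hR.restrictScalars, hdual.of_restrictScalars⟩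

end

theorem IsReflexiveExtension.isTorsionlessMod_dual {θ : S →+* R} (hθ : IsReflexiveExtension θ) :
    IsTorsionlessMod R (R →ₗ[S] S) := by
  obtain ⟨-, Φ, hΦ, map_add, map_smul, -⟩ := hθ
  let Φₗ : (R →ₗ[S] S) →ₗ[R] R :=
    { toFun := Φ
      map_add' := map_add
      map_smul' a f := map_smul a f (a • f) (coextensionModule_smul_apply a f) }
  exact isTorsionlessMod_self.of_injective Φₗ hΦ.injective

end RestrictScalars

theorem IsReflexiveExtension.isTorsionlessMod {S R : Type*} [Ring S] [Ring R] [Module S R]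
    {θ : S →+* R} (hθ : IsReflexiveExtension θ) : IsTorsionlessMod S R :=
  hθ.1.injective

theorem isScalarTower_of_smul_eq_map_smul {S R X : Type*} [Semiring S] [Semiring R]
    [AddCommMonoid X] [Module S R] [Module R X] [Module S X] (θ : S →+* R)
    (hR : ∀ (s : S) (r : R), s • r = θ s * r) (hX : ∀ (s : S) (x : X), s • x = θ s • x) :
    IsScalarTower S R X :=
  ⟨fun s r x => by rw [hR, hX, mul_smul]⟩

theorem reflexive_extension_preserves_torsionless
    {S : Type u} {R : Type v} [Ring S] [Ring R] (θ : S →+* R)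
    [Module S R] (hR : ∀ (s : S) (r : R), s • r = θ s * r)
    (hθ : IsReflexiveExtension θ)
    (X : Type w) [AddCommGroup X] [Module R X]
    [Module S X] (hX : ∀ (s : S) (x : X), s • x = θ s • x) :
    IsTorsionlessMod R X ↔ IsTorsionlessMod S X := by
  have : IsScalarTower S R R := isScalarTower_of_smul_eq_map_smul θ hR hR
  have : IsScalarTower S R X := isScalarTower_of_smul_eq_map_smul θ hR hX
  exact reflexive_extension_preserves_torsionless_general
    hθ.isTorsionlessMod hθ.isTorsionlessMod_dual
end

section
/- Let θ : S → R be a ring extension admitting a reflexive homomorphism φ, and assume Ext^k_{Sᵒᵖ}(R,S) = 0 for all k ≥ 1 (where R is regarded as a right S-module via θ). Then for every left R-module X and every n ≥ 1 there is an isomorphism of abelian groups Ext^n_{Rᵒᵖ}(Hom_R(X,R), R) ≅ Ext^n_{Sᵒᵖ}(Hom_S(X,S), S), where Hom_R(X,R) is a right R-module via (f·a)(x) = f(x)·a and Hom_S(X,S) is a right S-module via (g·s)(x) = g(x)s. -/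
/- STATEMENT 15: Let θ : S → R be a ring extension with a reflexive homomorphism φ,
and assume Ext^k_{Sᵒᵖ}(R,S) = 0 for all k ≥ 1. Then for every left R-module X and
n ≥ 1, Ext^n_{Rᵒᵖ}(Hom_R(X,R), R) ≅ Ext^n_{Sᵒᵖ}(Hom_S(X,S), S) as abelian groups. -/

open CategoryTheory

universe u v

/-- `φ : R → S` is a reflexive homomorphism for the ring extension `θ : S →+* R`:
it is additive, `S`-bilinear with respect to `θ`, and the induced maps
`l_φ : R → Hom_S(R,S)`, `w ↦ (r ↦ φ (r * w))`, and `r_φ : R → Hom_{Sᵒᵖ}(R,S)`,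
`w ↦ (r ↦ φ (w * r))`, are bijective (bijectivity onto the set of left,
resp. right, `S`-linear maps `R → S` is expressed elementwise). -/
def IsReflexiveHom {S : Type u} {R : Type v} [Ring S] [Ring R] (θ : S →+* R)
    (φ : R → S) : Prop :=
  (∀ a b : R, φ (a + b) = φ a + φ b) ∧
  (∀ (s : S) (r : R), φ (θ s * r) = s * φ r) ∧
  (∀ (s : S) (r : R), φ (r * θ s) = φ r * s) ∧
  Function.Injective (fun w : R => (fun r : R => φ (r * w))) ∧
  (∀ g : R → S, ((∀ a b : R, g (a + b) = g a + g b) ∧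
      ∀ (s : S) (r : R), g (θ s * r) = s * g r) → ∃ w : R, ∀ r, g r = φ (r * w)) ∧
  Function.Injective (fun w : R => (fun r : R => φ (w * r))) ∧
  (∀ g : R → S, ((∀ a b : R, g (a + b) = g a + g b) ∧
      ∀ (s : S) (r : R), g (r * θ s) = g r * s) → ∃ w : R, ∀ r, g r = φ (w * r))

/-! Since `Ext^k_{Sᵒᵖ}(R, S) = 0` for `k ≥ 1`, the functor `Hom_{Sᵒᵖ}(R, -)` stays exact on an
injective resolution of the right `S`-module `S`. Being right adjoint to the exact restriction
functor, it also preserves injectives, so it turns that resolution into an injective resolution of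
`Hom_{Sᵒᵖ}(R, S)`, and the adjunction gives `Extⁿ_{Rᵒᵖ}(M, Hom_{Sᵒᵖ}(R, S)) ≅ Extⁿ_{Sᵒᵖ}(M, S)`.
A reflexive homomorphism `φ` identifies `Hom_{Sᵒᵖ}(R, S)` with `R` through `r_φ`; for
`M = Hom_R(X, R)`, bijectivity of `l_φ` makes composition with `φ` an isomorphism from `M`, as a
right `S`-module, to `Hom_S(X, S)`. -/

universe w w'

section Comparison

variable {R : Type*} [Ring R] {C : Type*} [Category* C] [Abelian C] [Linear R C] {X Y : C}

section ProjectiveResolution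

variable [HasExt.{w} C] (P : ProjectiveResolution X)

lemma smul_extMk (r : R) {n : ℕ} (f : P.complex.X n ⟶ Y) (m : ℕ) (hm : n + 1 = m)
    (hf : P.complex.d m n ≫ f = 0) :
    r • P.extMk f m hm hf = P.extMk (r • f) m hm (by simp [hf]) := by
  simp [Abelian.Ext.smul_eq_comp_mk₀, P.extMk_comp_mk₀]

variable (R Y) in
/-- The class in `Ext` of a cocycle of the complex `Hom(P, Y)`, as a linear map. -/
noncomputable def extMkLinearMap (n m : ℕ) (hm : n + 1 = m) :
    LinearMap.ker ((P.complex.linearYonedaObj R Y).d n m).hom →ₗ[R] Abelian.Ext.{w} X Y n where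
  toFun f := P.extMk (show P.complex.X n ⟶ Y from f.1) m hm (LinearMap.mem_ker.1 f.2)
  map_add' _ _ := (P.add_extMk _ _ _ _ _ _).symm
  map_smul' r _ := (smul_extMk P r _ _ _ _).symm

lemma extMkLinearMap_surjective {n m : ℕ} (hm : n + 1 = m) :
    Function.Surjective (extMkLinearMap.{w} R Y P n m hm) := fun α ↦ by
  obtain ⟨f, hf, rfl⟩ := P.extMk_surjective α m hm
  exact ⟨⟨f, hf⟩, rfl⟩

lemma ker_extMkLinearMap {p n m : ℕ} (hp : p + 1 = n) (hm : n + 1 = m) :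
    LinearMap.ker (extMkLinearMap.{w} R Y P n m hm) =
      LinearMap.range ((P.complex.linearYonedaObj R Y).sc' p n m).moduleCatToCycles := by
  ext f
  refine (P.extMk_eq_zero_iff _ m hm (LinearMap.mem_ker.1 f.2) p hp).trans ?_
  exact ⟨fun ⟨g, hg⟩ ↦ ⟨g, Subtype.ext hg⟩, fun ⟨g, hg⟩ ↦ ⟨g, congrArg Subtype.val hg⟩⟩

end ProjectiveResolution

variable [EnoughProjectives C]

variable (R X Y) in
/-- The comparison between `Ext` as a derived functor and `Ext` as morphisms in the derived
category, in positive degrees. -/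
noncomputable def extSuccEquivAbelianExt [HasExt.{w} C] (n : ℕ) :
    ((Ext R C (n + 1)).obj (.op X)).obj Y ≃ₗ[R] Abelian.Ext.{w} X Y (n + 1) :=
  let P := projectiveResolution X
  let K := P.complex.linearYonedaObj R Y
  let T := K.sc' n (n + 1) (n + 2)
  let π : LinearMap.ker T.g.hom →ₗ[R] Abelian.Ext.{w} X Y (n + 1) := extMkLinearMap R Y P _ _ rfl
  have hπ : LinearMap.range T.moduleCatToCycles = LinearMap.ker π :=
    (ker_extMkLinearMap P rfl rfl).symm
  (P.isoExt (n + 1) Y ≪≫ K.homologyIsoSc' n (n + 1) (n + 2) (by simp) (by simp) ≪≫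
      T.moduleCatHomologyIso).toLinearEquiv ≪≫ₗ
    Submodule.quotEquivOfEq _ _ hπ ≪≫ₗ
    π.quotKerEquivOfSurjective (extMkLinearMap_surjective P rfl)

variable (R X Y) in
/-- The additive equivalence underlying `extSuccEquivAbelianExt`. Over `R = ℤ` the module structure
on `Abelian.Ext` given by `Linear ℤ C` is not definitionally the canonical one, so that
`LinearEquiv.toAddEquiv` is only usable for a generic `R`. -/
noncomputable def extSuccAddEquivAbelianExt [HasExt.{w} C] (n : ℕ) :
    ((Ext R C (n + 1)).obj (.op X)).obj Y ≃+ Abelian.Ext.{w} X Y (n + 1) :=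
  (extSuccEquivAbelianExt R X Y n).toAddEquiv

variable (R) in
/-- Functoriality of `Ext` with respect to isomorphisms in both variables. -/
noncomputable def extCongr {X' Y' : C} (e : X ≅ X') (e' : Y ≅ Y') (n : ℕ) :
    ((Ext R C n).obj (.op X)).obj Y ≃ₗ[R] ((Ext R C n).obj (.op X')).obj Y' :=
  (((Ext R C n).mapIso e.symm.op).app Y ≪≫
    ((Ext R C n).obj (.op X')).mapIso e').toLinearEquiv

end Comparison

section Adjunction

variable {C : Type*} [Category* C] {D : Type*} [Category* D] {F : C ⥤ D} {G : D ⥤ C}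
  (adj : F ⊣ G)

include adj in
lemma epi_map_of_forall_exists_comp_eq {P : C} (hP : IsSeparator P) {Y Z : D} (g : Y ⟶ Z)
    (hg : ∀ a : F.obj P ⟶ Z, ∃ b, b ≫ g = a) : Epi (G.map g) where
  left_cancellation a b hab := hP.def _ _ fun p ↦ by
    obtain ⟨q, hq⟩ := hg ((adj.homEquiv _ _).symm p)
    have hp : p = adj.homEquiv _ _ q ≫ G.map g := by
      rw [← adj.homEquiv_naturality_right, hq, Equiv.apply_symm_apply]
    simp only [hp, Category.assoc, hab]

variable [Abelian D] [HasExt.{w'} D]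

lemma exists_comp_eq_of_subsingleton_ext {S : ShortComplex D} (hS : S.ShortExact) {A : D}
    (hA : Subsingleton (Abelian.Ext.{w'} A S.X₁ 1)) (a : A ⟶ S.X₃) : ∃ b, b ≫ S.g = a := by
  obtain ⟨x, hx⟩ := Abelian.Ext.covariant_sequence_exact₃ A hS (.mk₀ a) (zero_add 1)
    (Subsingleton.elim _ _)
  obtain ⟨b, rfl⟩ := (Abelian.Ext.mk₀_bijective _ _).2 x
  exact ⟨b, (Abelian.Ext.mk₀_bijective _ _).1 (by simpa using hx)⟩

lemma subsingleton_ext_X₃ {S : ShortComplex D} (hS : S.ShortExact) [Injective S.X₂] (A : D)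
    (n : ℕ) (hA : Subsingleton (Abelian.Ext.{w'} A S.X₁ (n + 2))) :
    Subsingleton (Abelian.Ext.{w'} A S.X₃ (n + 1)) :=
  subsingleton_of_forall_eq 0 fun x ↦ by
    obtain ⟨y, rfl⟩ := Abelian.Ext.covariant_sequence_exact₃ A hS x rfl (Subsingleton.elim _ _)
    rw [Abelian.Ext.eq_zero_of_injective y, Abelian.Ext.zero_comp]

variable [Abelian C]

include adj in
lemma shortExact_map_of_adjunction [G.PreservesZeroMorphisms] {P : C} (hP : IsSeparator P)
    {S : ShortComplex D} (hS : S.ShortExact)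
    (hPS : Subsingleton (Abelian.Ext.{w'} (F.obj P) S.X₁ 1)) : (S.map G).ShortExact :=
  have := adj.rightAdjoint_preservesLimits
  have := hS.mono_f
  { exact := hS.exact.map_of_mono_of_preservesKernel G inferInstance inferInstance
    mono_f := inferInstanceAs (Mono (G.map S.f))
    epi_g := epi_map_of_forall_exists_comp_eq adj hP S.g
      (exists_comp_eq_of_subsingleton_ext hS hPS) }

variable [F.Additive] [Limits.PreservesFiniteLimits F] [Limits.PreservesFiniteColimits F]

lemma extClass_map_comp_mk₀_counit [G.PreservesZeroMorphisms] {S : ShortComplex D}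
    (hS : S.ShortExact) (hGS : (S.map G).ShortExact) :
    (hGS.map_of_exact F).extClass.comp (.mk₀ (adj.counit.app S.X₁)) (add_zero 1) =
      (Abelian.Ext.mk₀ (adj.counit.app S.X₃)).comp (hS.extClass : Abelian.Ext.{w'} _ _ 1)
        (zero_add 1) :=
  let ε : (S.map G).map F ⟶ S :=
    { τ₁ := adj.counit.app S.X₁
      τ₂ := adj.counit.app S.X₂
      τ₃ := adj.counit.app S.X₃
      comm₁₂ := (adj.counit.naturality S.f).symm
      comm₂₃ := (adj.counit.naturality S.g).symm }
  ShortComplex.ShortExact.extClass_naturality (hGS.map_of_exact F) hS ε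

variable [HasExt.{w} C]

/-- The natural map `Extⁿ(X, G Y) → Extⁿ(F X, Y)` attached to an adjunction `F ⊣ G` with `F`
exact: apply `F`, then push forward along the counit. -/
noncomputable def adjunctionExtHom (X : C) (Y : D) (n : ℕ) :
    Abelian.Ext.{w} X (G.obj Y) n →+ Abelian.Ext.{w'} (F.obj X) Y n :=
  ((Abelian.Ext.mk₀ (adj.counit.app Y)).postcomp (F.obj X) (add_zero n)).comp
    (F.mapExtAddHom X (G.obj Y) n)

lemma adjunctionExtHom_apply {X : C} {Y : D} {n : ℕ} (α : Abelian.Ext.{w} X (G.obj Y) n) :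
    adjunctionExtHom.{w, w'} adj X Y n α =
      (α.mapExactFunctor F).comp (.mk₀ (adj.counit.app Y)) (add_zero n) := rfl

lemma adjunctionExtHom_mk₀ {X : C} {Y : D} (f : X ⟶ G.obj Y) :
    adjunctionExtHom.{w, w'} adj X Y 0 (.mk₀ f) = .mk₀ ((adj.homEquiv X Y).symm f) := by
  simp [adjunctionExtHom_apply, Abelian.Ext.mapExactFunctor_mk₀, adj.homEquiv_counit]

lemma adjunctionExtHom_zero_bijective (X : C) (Y : D) :
    Function.Bijective (adjunctionExtHom.{w, w'} adj X Y 0) := by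
  refine (Function.Bijective.of_comp_iff _ (Abelian.Ext.mk₀_bijective X (G.obj Y))).1 ?_
  have h : adjunctionExtHom.{w, w'} adj X Y 0 ∘ Abelian.Ext.mk₀ =
      Abelian.Ext.mk₀ ∘ (adj.homEquiv X Y).symm := funext (adjunctionExtHom_mk₀ adj)
  exact h ▸ (Abelian.Ext.mk₀_bijective _ _).comp (Equiv.bijective _)

lemma adjunctionExtHom_comp_mk₀ {X : C} {Y Z : D} (g : Y ⟶ Z) {n : ℕ}
    (α : Abelian.Ext.{w} X (G.obj Y) n) :
    adjunctionExtHom.{w, w'} adj X Z n (α.comp (.mk₀ (G.map g)) (add_zero n)) =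
      (adjunctionExtHom.{w, w'} adj X Y n α).comp (.mk₀ g) (add_zero n) := by
  simp [adjunctionExtHom_apply, Abelian.Ext.mapExactFunctor_comp, Abelian.Ext.mapExactFunctor_mk₀,
    Abelian.Ext.comp_assoc_of_second_deg_zero]

lemma adjunctionExtHom_comp_extClass [G.PreservesZeroMorphisms] {S : ShortComplex D}
    (hS : S.ShortExact) (hGS : (S.map G).ShortExact) {X : C} {n : ℕ}
    (α : Abelian.Ext.{w} X (S.map G).X₃ n) :
    adjunctionExtHom.{w, w'} adj X S.X₁ (n + 1) (α.comp hGS.extClass rfl) =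
      (adjunctionExtHom.{w, w'} adj X S.X₃ n α).comp hS.extClass rfl :=
  calc ((α.comp hGS.extClass rfl).mapExactFunctor F).comp (.mk₀ (adj.counit.app S.X₁))
        (add_zero (n + 1))
    _ = ((α.mapExactFunctor F).comp (hGS.map_of_exact F).extClass rfl).comp
          (.mk₀ (adj.counit.app S.X₁)) (add_zero (n + 1)) := by
      rw [Abelian.Ext.mapExactFunctor_comp, Abelian.Ext.mapExactFunctor_extClass]
      rfl
    _ = (α.mapExactFunctor F).comp
          ((Abelian.Ext.mk₀ (adj.counit.app S.X₃)).comp hS.extClass (zero_add 1)) rfl := by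
      rw [← extClass_map_comp_mk₀_counit adj hS hGS]
      exact Abelian.Ext.comp_assoc_of_third_deg_zero _ _ _ _
    _ = ((α.mapExactFunctor F).comp (.mk₀ (adj.counit.app S.X₃)) (add_zero n)).comp
          hS.extClass rfl :=
      (Abelian.Ext.comp_assoc_of_second_deg_zero _ _ _ _).symm

attribute [local instance] Abelian.Ext.subsingleton_of_injective in
theorem adjunctionExtHom_bijective [EnoughInjectives D] {P : C} (hP : IsSeparator P) (X : C)
    (Y : D) (hY : ∀ k, Subsingleton (Abelian.Ext.{w'} (F.obj P) Y (k + 1))) (n : ℕ) :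
    Function.Bijective (adjunctionExtHom.{w, w'} adj X Y n) := by
  have : G.Additive := adj.right_adjoint_additive
  induction n generalizing Y with
  | zero => exact adjunctionExtHom_zero_bijective adj X Y
  | succ n ih =>
    let I : InjectivePresentation Y := Classical.arbitrary _
    let S := ShortComplex.mk _ _ (Limits.cokernel.condition I.f)
    have hS : S.ShortExact := { exact := ShortComplex.exact_cokernel I.f }
    have hI : Injective S.X₂ := I.injective
    have hGI : Injective (S.map G).X₂ := Injective.injective_of_adjoint adj S.X₂
    have hGS := shortExact_map_of_adjunction adj hP hS (hY 0)
    exact AddMonoidHom.bijective_of_surjective_of_bijective_of_right_exact _ _ _ _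
      (adjunctionExtHom adj X S.X₂ n) (adjunctionExtHom adj X S.X₃ n)
      (adjunctionExtHom adj X S.X₁ (n + 1))
      (AddMonoidHom.ext fun α ↦ (adjunctionExtHom_comp_mk₀ adj S.g α).symm)
      (AddMonoidHom.ext fun α ↦ (adjunctionExtHom_comp_extClass adj hS hGS α).symm)
      ((ShortComplex.ab_exact_iff_function_exact _).1
        (Abelian.Ext.covariant_sequence_exact₃' X hGS n (n + 1) rfl))
      ((ShortComplex.ab_exact_iff_function_exact _).1
        (Abelian.Ext.covariant_sequence_exact₃' (F.obj X) hS n (n + 1) rfl))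
      (ih _ fun _ ↦ inferInstance).surjective
      (ih _ fun k ↦ subsingleton_ext_X₃ hS _ k (hY (k + 1)))
      (fun x₁ ↦ Abelian.Ext.covariant_sequence_exact₁ _ hGS x₁ (by subsingleton) rfl)
      (fun y₁ ↦ Abelian.Ext.covariant_sequence_exact₁ _ hS y₁ (by subsingleton) rfl)

end Adjunction

section ChangeOfRings

instance preservesFiniteLimits_restrictScalars {A B : Type*} [Ring A] [Ring B] (f : A →+* B) :
    Limits.PreservesFiniteLimits (ModuleCat.restrictScalars.{w} f) where
  preservesFiniteLimits _ _ _ := ⟨inferInstance⟩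

instance preservesFiniteColimits_restrictScalars {A B : Type*} [Ring A] [Ring B] (f : A →+* B) :
    Limits.PreservesFiniteColimits (ModuleCat.restrictScalars.{w} f) where
  preservesFiniteColimits _ _ _ := ⟨inferInstance⟩

lemma isSeparator_moduleCat_of_self (A : Type u) [Ring A] : IsSeparator (ModuleCat.of A A) :=
  (isSeparator_def _).2 fun M N f g h ↦ ModuleCat.hom_ext <| LinearMap.ext fun m ↦ by
    simpa using ConcreteCategory.congr_hom (h (ModuleCat.ofHom (LinearMap.toSpanSingleton A M m)))
      (1 : A)

/-- Change of rings: if `Ext^k_A(B, Y)` vanishes for `k ≥ 1`, then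
`Extⁿ_B(X, Hom_A(B, Y)) ≃ Extⁿ_A(X, Y)`. -/
noncomputable def extCoextendScalarsEquiv {A B : Type u} [Ring A] [Ring B] (f : A →+* B)
    (X : ModuleCat.{u} B) (Y : ModuleCat.{u} A)
    (hY : ∀ k, Subsingleton (Abelian.Ext.{u}
      ((ModuleCat.restrictScalars f).obj (ModuleCat.of B B)) Y (k + 1))) (n : ℕ) :
    Abelian.Ext.{u} X ((ModuleCat.coextendScalars.{u, u, u} f).obj Y) n ≃+
      Abelian.Ext.{u} ((ModuleCat.restrictScalars.{u} f).obj X) Y n :=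
  .ofBijective _ (adjunctionExtHom_bijective (ModuleCat.restrictCoextendScalarsAdj.{u, u, u} f)
    (isSeparator_moduleCat_of_self B) X Y hY n)

end ChangeOfRings

/-- The right `R`-module `R`, restricted to `S` and written without opposites. -/
def restrictScalarsOpSelfEquiv {S : Type u} {R : Type v} [Ring S] [Ring R] (θ : S →+* R)
    [Module Sᵐᵒᵖ R] (hR : ∀ (s : S) (r : R), MulOpposite.op s • r = r * θ s) :
    (ModuleCat.restrictScalars θ.op).obj (ModuleCat.of Rᵐᵒᵖ Rᵐᵒᵖ) ≃ₗ[Sᵐᵒᵖ] R where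
  __ := (MulOpposite.opAddEquiv (α := R)).symm
  map_smul' s r := (hR s.unop (MulOpposite.unop (α := R) r)).symm

namespace IsReflexiveHom

section

variable {S : Type u} {R : Type v} [Ring S] [Ring R] {θ : S →+* R} {φ : R → S}
  (hφ : IsReflexiveHom θ φ)

include hφ

protected lemma map_add (a b : R) : φ (a + b) = φ a + φ b := hφ.1 a b

lemma map_ringHom_mul (s : S) (r : R) : φ (θ s * r) = s * φ r := hφ.2.1 s r

lemma map_mul_ringHom (r : R) (s : S) : φ (r * θ s) = φ r * s := hφ.2.2.1 s r

lemma eq_of_forall_map_mul_left {a b : R} (h : ∀ r, φ (r * a) = φ (r * b)) : a = b :=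
  hφ.2.2.2.1 (funext h)

lemma exists_eq_map_mul_left (g : R →+ S) (hg : ∀ s r, g (θ s * r) = s * g r) :
    ∃ w, ∀ r, g r = φ (r * w) :=
  hφ.2.2.2.2.1 g ⟨map_add g, hg⟩

lemma eq_of_forall_map_mul_right {a b : R} (h : ∀ r, φ (a * r) = φ (b * r)) : a = b :=
  hφ.2.2.2.2.2.1 (funext h)

lemma exists_eq_map_mul_right (g : R →+ S) (hg : ∀ s r, g (r * θ s) = g r * s) :
    ∃ w, ∀ r, g r = φ (w * r) :=
  hφ.2.2.2.2.2.2 g ⟨map_add g, hg⟩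

/-- The map `r_φ : R → Hom_{Sᵒᵖ}(R, S)`, as a morphism of right `R`-modules. -/
noncomputable def toCoextendScalars :
    R →ₗ[Rᵐᵒᵖ] (ModuleCat.coextendScalars θ.op).obj (ModuleCat.of Sᵐᵒᵖ S) where
  toFun w := (ModuleCat.CoextendScalars.equiv θ.op _).symm
    { toFun (r : Rᵐᵒᵖ) := φ (w * r.unop)
      map_add' _ _ := (congrArg φ (mul_add w _ _)).trans (hφ.map_add _ _)
      map_smul' _ _ := (congrArg φ (mul_assoc w _ _).symm).trans (hφ.map_mul_ringHom _ _) }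
  map_add' a b := (ModuleCat.CoextendScalars.equiv θ.op _).injective <|
    LinearMap.ext fun _ ↦ (congrArg φ (add_mul a b _)).trans (hφ.map_add _ _)
  map_smul' _ b := (ModuleCat.CoextendScalars.equiv θ.op _).injective <|
    LinearMap.ext fun _ ↦ congrArg φ (mul_assoc b _ _)

lemma toCoextendScalars_bijective : Function.Bijective hφ.toCoextendScalars := by
  constructor
  · intro a b hab
    exact hφ.eq_of_forall_map_mul_right fun r ↦
      LinearMap.congr_fun (congrArg (ModuleCat.CoextendScalars.equiv θ.op _) hab)
        (MulOpposite.op r : Rᵐᵒᵖ)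
  · intro g
    let g' := ModuleCat.CoextendScalars.equiv θ.op _ g
    obtain ⟨w, hw⟩ := hφ.exists_eq_map_mul_right
      (g'.toAddMonoidHom.comp (MulOpposite.opAddEquiv (α := R)).toAddMonoidHom)
      fun s r ↦ g'.map_smul (MulOpposite.op s) (MulOpposite.op r : Rᵐᵒᵖ)
    exact ⟨w, (ModuleCat.CoextendScalars.equiv θ.op _).injective
      (LinearMap.ext fun r : Rᵐᵒᵖ ↦ (hw r.unop).symm)⟩

variable {X : Type*} [AddCommGroup X] [Module R X] [Module S X]
  (hX : ∀ (s : S) (x : X), s • x = θ s • x)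

/-- Composition with `φ`, as a map `Hom_R(X, R) → Hom_S(X, S)`. -/
def postcomp (h : X →ₗ[R] R) : X →ₗ[S] S where
  toFun x := φ (h x)
  map_add' a b := by rw [map_add, hφ.map_add]
  map_smul' s x := by
    rw [hX, map_smul, smul_eq_mul, hφ.map_ringHom_mul, RingHom.id_apply, smul_eq_mul]

lemma postcomp_injective : Function.Injective (hφ.postcomp hX) := fun a b hab ↦
  LinearMap.ext fun x ↦ hφ.eq_of_forall_map_mul_left fun r ↦ by
    simpa [postcomp] using LinearMap.congr_fun hab (r • x)

include hX in
lemma exists_forall_apply_smul_eq (g : X →ₗ[S] S) (x : X) : ∃ w, ∀ r : R, g (r • x) = φ (r * w) :=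
  hφ.exists_eq_map_mul_left
    (g.toAddMonoidHom.comp (LinearMap.toSpanSingleton R X x).toAddMonoidHom)
    fun s r ↦ by simp [mul_smul, ← hX]

lemma postcomp_surjective : Function.Surjective (hφ.postcomp hX) := by
  intro g
  choose w hw using hφ.exists_forall_apply_smul_eq hX g
  have w_eq {x : X} {a : R} (ha : ∀ r : R, g (r • x) = φ (r * a)) : w x = a :=
    hφ.eq_of_forall_map_mul_left fun r ↦ (hw x r).symm.trans (ha r)
  let h : X →ₗ[R] R :=
    { toFun := w
      map_add' a b := w_eq fun r ↦ by rw [smul_add, map_add, hw, hw, mul_add, hφ.map_add]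
      map_smul' a x := w_eq fun r ↦ by
        rw [smul_smul, hw, RingHom.id_apply, smul_eq_mul, mul_assoc] }
  exact ⟨h, LinearMap.ext fun x ↦ by simpa [h, postcomp] using (hw x 1).symm⟩

/-- The isomorphism `Hom_R(X, R) ≃ Hom_S(X, S)` of right `S`-modules given by composition
with `φ`. -/
noncomputable def dualEquiv :
    (ModuleCat.restrictScalars θ.op).obj (ModuleCat.of Rᵐᵒᵖ (X →ₗ[R] R)) ≃ₗ[Sᵐᵒᵖ]
      (X →ₗ[S] S) :=
  let f : (ModuleCat.restrictScalars θ.op).obj (ModuleCat.of Rᵐᵒᵖ (X →ₗ[R] R)) →ₗ[Sᵐᵒᵖ]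
      (X →ₗ[S] S) :=
    { toFun := hφ.postcomp hX
      map_add' _ _ := LinearMap.ext fun _ ↦ hφ.map_add _ _
      map_smul' _ _ := LinearMap.ext fun _ ↦ hφ.map_mul_ringHom _ _ }
  .ofBijective f ⟨hφ.postcomp_injective hX, hφ.postcomp_surjective hX⟩

end

section

variable {S R : Type u} [Ring S] [Ring R] {θ : S →+* R} {φ : R → S} (hφ : IsReflexiveHom θ φ)

/-- The isomorphism `R ≅ Hom_{Sᵒᵖ}(R, S)` of right `R`-modules given by `r_φ`. -/
noncomputable def coextendScalarsIso :
    ModuleCat.of Rᵐᵒᵖ R ≅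
      (ModuleCat.coextendScalars.{u, u, u} θ.op).obj (ModuleCat.of Sᵐᵒᵖ S) :=
  (LinearEquiv.ofBijective _ hφ.toCoextendScalars_bijective).toModuleIso

/-- The isomorphism `Extⁿ_{Rᵒᵖ}(M, R) ≃ Extⁿ_{Sᵒᵖ}(M, S)` for `n ≥ 1` and any right
`R`-module `M`. -/
noncomputable def extEquiv [Module Sᵐᵒᵖ R]
    (hR : ∀ (s : S) (r : R), MulOpposite.op s • r = r * θ s)
    (hvanish : ∀ k : ℕ, Subsingleton
      (((Ext ℤ (ModuleCat.{u} Sᵐᵒᵖ) (k + 1)).obj (.op (ModuleCat.of Sᵐᵒᵖ R))).obj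
        (ModuleCat.of Sᵐᵒᵖ S)))
    (M : ModuleCat.{u} Rᵐᵒᵖ) (n : ℕ) :
    ((Ext ℤ (ModuleCat.{u} Rᵐᵒᵖ) (n + 1)).obj (.op M)).obj (ModuleCat.of Rᵐᵒᵖ R) ≃+
      ((Ext ℤ (ModuleCat.{u} Sᵐᵒᵖ) (n + 1)).obj
        (.op ((ModuleCat.restrictScalars.{u} θ.op).obj M))).obj (ModuleCat.of Sᵐᵒᵖ S) :=
  have hY (k : ℕ) : Subsingleton (Abelian.Ext.{u}
      ((ModuleCat.restrictScalars θ.op).obj (ModuleCat.of Rᵐᵒᵖ Rᵐᵒᵖ)) (ModuleCat.of Sᵐᵒᵖ S)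
      (k + 1)) :=
    have := hvanish k
    ((extSuccEquivAbelianExt ℤ _ _ k).symm ≪≫ₗ
      extCongr ℤ (restrictScalarsOpSelfEquiv θ hR).toModuleIso (.refl _) (k + 1)).subsingleton
  let e₁ := (extCongr ℤ (.refl M) hφ.coextendScalarsIso (n + 1)).toAddEquiv
  let e₂ := extSuccAddEquivAbelianExt.{u} ℤ M
    ((ModuleCat.coextendScalars.{u, u, u} θ.op).obj (ModuleCat.of Sᵐᵒᵖ S)) n
  let e₃ := extCoextendScalarsEquiv θ.op M (ModuleCat.of Sᵐᵒᵖ S) hY (n + 1)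
  let e₄ := (extSuccAddEquivAbelianExt.{u} ℤ ((ModuleCat.restrictScalars.{u} θ.op).obj M)
    (ModuleCat.of Sᵐᵒᵖ S) n).symm
  e₁.trans (e₂.trans (e₃.trans e₄))

end

end IsReflexiveHom

theorem ext_iso_right {S R : Type u} [Ring S] [Ring R] (θ : S →+* R)
    (φ : R → S) (hφ : IsReflexiveHom θ φ)
    [Module Sᵐᵒᵖ R] (hR' : ∀ (s : S) (r : R), MulOpposite.op s • r = r * θ s)
    (hvanish : ∀ k : ℕ, 1 ≤ k → Subsingleton
      (((Ext ℤ (ModuleCat.{u} Sᵐᵒᵖ) k).obj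
        (Opposite.op (ModuleCat.of Sᵐᵒᵖ R))).obj (ModuleCat.of Sᵐᵒᵖ S)))
    (X : Type u) [AddCommGroup X] [Module R X]
    [Module S X] (hX : ∀ (s : S) (x : X), s • x = θ s • x) :
    ∀ n : ℕ, 1 ≤ n → Nonempty
      ((((Ext ℤ (ModuleCat.{u} Rᵐᵒᵖ) n).obj
          (Opposite.op (ModuleCat.of Rᵐᵒᵖ (X →ₗ[R] R)))).obj (ModuleCat.of Rᵐᵒᵖ R)) ≃+
       (((Ext ℤ (ModuleCat.{u} Sᵐᵒᵖ) n).obj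
          (Opposite.op (ModuleCat.of Sᵐᵒᵖ (X →ₗ[S] S)))).obj (ModuleCat.of Sᵐᵒᵖ S))) := by
  intro n hn
  obtain ⟨n, rfl⟩ := Nat.exists_eq_add_of_le' hn
  have hvanish' (k : ℕ) := hvanish (k + 1) (Nat.le_add_left 1 k)
  exact ⟨(hφ.extEquiv hR' hvanish' (ModuleCat.of Rᵐᵒᵖ (X →ₗ[R] R)) n).trans
    (extCongr ℤ (hφ.dualEquiv hX).toModuleIso (.refl _) (n + 1)).toAddEquiv⟩
end
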